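/- arXiv:1108.0351 — 5 statements merged into one kernel-verified Lean document; each statement's English description precedes it below -/
import Mathlib

section
/- Let 𝒞 be a category, ⊗ : 𝒞 × 𝒞 → 𝒞 a functor, and α a natural isomorphism with components α_{A,B,C} : (A ⊗ B) ⊗ C ≅ A ⊗ (B ⊗ C) satisfying the pentagon identity. Let P be an object of 𝒞, θ : P ⊗ P ≅ P an isomorphism, and let C : P → P be the unique morphism satisfying C ∘ θ ∘ (θ ⊗ id_P) = θ ∘ (id_P ⊗ θ) ∘ α_{P,P,P}. If moreover θ ∘ (C ⊗ id_P) = C ∘ θ and θ ∘ (id_P ⊗ C) = C ∘ θ, then C = id_P. (In particular this holds in any monoidal category with its tensor product and associator.) -/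
/-!
STATEMENT 0: The idempotent theorem. Let `𝒞` be a category, `⊗ : 𝒞 × 𝒞 ⥤ 𝒞` a functor
("operation"), `α` a natural isomorphism `(A ⊗ B) ⊗ C ≅ A ⊗ (B ⊗ C)` satisfying the
pentagon identity, `(P, θ)` an idempotent, and `C : P ⟶ P` the morphism defined by the
commutative diagram `C ∘ θ ∘ (θ ⊗ id) = θ ∘ (id ⊗ θ) ∘ α`.  If `θ ∘ (C ⊗ id) = C ∘ θ`
and `θ ∘ (id ⊗ C) = C ∘ θ`, then `C = id`.
-/

open CategoryTheory

universe v u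

/-!
Multiply generalized elements of `P` along `θ`, writing `f ⋆ g := (f ⊗ g) ≫ θ`. The morphism `C`
measures the failure of associativity: `α ≫ (f ⋆ (g ⋆ h)) = ((f ⋆ g) ⋆ h) ≫ C`. By the two
compatibilities `C` may be pulled out of either factor of a product, so each of the five edges of
the pentagon contributes exactly one factor `C`. Comparing its two-edge side with its three-edge
side gives `C ≫ C = C ≫ C ≫ C`, and `C` can be cancelled: its defining equation makes it epi.
-/

section

open scoped CategoryTheory.Prod

variable {𝒞 : Type u} [Category.{v} 𝒞]

/-- A natural transformation `(A ⊗ B) ⊗ C ⟶ A ⊗ (B ⊗ C)` satisfying the pentagon identity: an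
associator that need not be invertible, as in skew-monoidal categories, but without a unit. -/
structure SkewAssociator (tensor : 𝒞 × 𝒞 ⥤ 𝒞) where
  hom (A B C : 𝒞) : tensor.obj (tensor.obj (A, B), C) ⟶ tensor.obj (A, tensor.obj (B, C))
  naturality {A B C A' B' C' : 𝒞} (f : A ⟶ A') (g : B ⟶ B') (h : C ⟶ C') :
    tensor.map (tensor.map (f ×ₘ g) ×ₘ h) ≫ hom A' B' C' =
      hom A B C ≫ tensor.map (f ×ₘ tensor.map (g ×ₘ h))
  pentagon (A B C D : 𝒞) :
    hom (tensor.obj (A, B)) C D ≫ hom A B (tensor.obj (C, D)) =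
      tensor.map (hom A B C ×ₘ 𝟙 D) ≫ hom A (tensor.obj (B, C)) D ≫
        tensor.map (𝟙 A ×ₘ hom B C D)

variable {tensor : 𝒞 × 𝒞 ⥤ 𝒞} {P : 𝒞} {V W X Y Z : 𝒞}

/-- The product `f ⋆ g : X ⊗ Y ⟶ P` of two generalized elements `f : X ⟶ P` and `g : Y ⟶ P` under
the multiplication `θ : P ⊗ P ⟶ P`. -/
def genMul (θ : tensor.obj (P, P) ⟶ P) (f : X ⟶ P) (g : Y ⟶ P) : tensor.obj (X, Y) ⟶ P :=
  tensor.map (f ×ₘ g) ≫ θ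

variable {θ : tensor.obj (P, P) ⟶ P} {C : P ⟶ P}

local infix:85 " ⋆ " => genMul θ

theorem map_comp_genMul (u : V ⟶ X) (w : W ⟶ Y) (f : X ⟶ P) (g : Y ⟶ P) :
    tensor.map (u ×ₘ w) ≫ (f ⋆ g) = (u ≫ f) ⋆ (w ≫ g) := by
  simp only [genMul, ← tensor.map_comp_assoc, prod_comp]

theorem comp_genMul (hleft : C ⋆ 𝟙 P = θ ≫ C) (f : X ⟶ P) (g : Y ⟶ P) :
    (f ≫ C) ⋆ g = (f ⋆ g) ≫ C := by
  calc (f ≫ C) ⋆ g = tensor.map (f ×ₘ g) ≫ (C ⋆ 𝟙 P) := by rw [map_comp_genMul, Category.comp_id]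
    _ = (f ⋆ g) ≫ C := by rw [hleft, genMul, Category.assoc]

theorem genMul_comp (hright : 𝟙 P ⋆ C = θ ≫ C) (f : X ⟶ P) (g : Y ⟶ P) :
    f ⋆ (g ≫ C) = (f ⋆ g) ≫ C := by
  calc f ⋆ (g ≫ C) = tensor.map (f ×ₘ g) ≫ (𝟙 P ⋆ C) := by rw [map_comp_genMul, Category.comp_id]
    _ = (f ⋆ g) ≫ C := by rw [hright, genMul, Category.assoc]

instance isSplitEpi_genMul [IsSplitEpi θ] (f : X ⟶ P) (g : Y ⟶ P) [IsSplitEpi f] [IsSplitEpi g] :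
    IsSplitEpi (f ⋆ g) := by
  have : IsSplitEpi (f ×ₘ g) :=
    IsSplitEpi.mk' ⟨section_ f ×ₘ section_ g, Prod.hom_ext (IsSplitEpi.id f) (IsSplitEpi.id g)⟩
  unfold genMul
  infer_instance

namespace SkewAssociator

variable (α : SkewAssociator tensor)

theorem hom_comp_genMul (hC : (θ ⋆ 𝟙 P) ≫ C = α.hom P P P ≫ (𝟙 P ⋆ θ))
    (f : X ⟶ P) (g : Y ⟶ P) (h : Z ⟶ P) :
    α.hom X Y Z ≫ (f ⋆ (g ⋆ h)) = ((f ⋆ g) ⋆ h) ≫ C := by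
  calc α.hom X Y Z ≫ (f ⋆ (g ⋆ h))
      = α.hom X Y Z ≫ tensor.map (f ×ₘ tensor.map (g ×ₘ h)) ≫ (𝟙 P ⋆ θ) := by
        rw [map_comp_genMul, Category.comp_id, ← genMul]
    _ = tensor.map (tensor.map (f ×ₘ g) ×ₘ h) ≫ α.hom P P P ≫ (𝟙 P ⋆ θ) := by
        rw [← Category.assoc, ← α.naturality, Category.assoc]
    _ = tensor.map (tensor.map (f ×ₘ g) ×ₘ h) ≫ (θ ⋆ 𝟙 P) ≫ C := by rw [hC]
    _ = ((f ⋆ g) ⋆ h) ≫ C := by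
        rw [← Category.assoc, map_comp_genMul, Category.comp_id, ← genMul]

theorem pentagon_two_edges_comp_genMul (hC : (θ ⋆ 𝟙 P) ≫ C = α.hom P P P ≫ (𝟙 P ⋆ θ))
    (f : W ⟶ P) (g : X ⟶ P) (h : Y ⟶ P) (k : Z ⟶ P) :
    (α.hom (tensor.obj (W, X)) Y Z ≫ α.hom W X (tensor.obj (Y, Z))) ≫ (f ⋆ (g ⋆ (h ⋆ k))) =
      (((f ⋆ g) ⋆ h) ⋆ k) ≫ C ≫ C := by
  rw [Category.assoc, α.hom_comp_genMul hC f g (h ⋆ k), ← Category.assoc,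
    α.hom_comp_genMul hC (f ⋆ g) h k, Category.assoc]

theorem pentagon_three_edges_comp_genMul
    (hC : (θ ⋆ 𝟙 P) ≫ C = α.hom P P P ≫ (𝟙 P ⋆ θ))
    (hleft : C ⋆ 𝟙 P = θ ≫ C) (hright : 𝟙 P ⋆ C = θ ≫ C)
    (f : W ⟶ P) (g : X ⟶ P) (h : Y ⟶ P) (k : Z ⟶ P) :
    (tensor.map (α.hom W X Y ×ₘ 𝟙 Z) ≫ α.hom W (tensor.obj (X, Y)) Z ≫
        tensor.map (𝟙 W ×ₘ α.hom X Y Z)) ≫ (f ⋆ (g ⋆ (h ⋆ k))) =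
      (((f ⋆ g) ⋆ h) ⋆ k) ≫ C ≫ C ≫ C := by
  have inner_right : tensor.map (𝟙 W ×ₘ α.hom X Y Z) ≫ (f ⋆ (g ⋆ (h ⋆ k))) =
      (f ⋆ ((g ⋆ h) ⋆ k)) ≫ C := by
    rw [map_comp_genMul, Category.id_comp, α.hom_comp_genMul hC, genMul_comp hright]
  have outer : α.hom W (tensor.obj (X, Y)) Z ≫ (f ⋆ ((g ⋆ h) ⋆ k)) = ((f ⋆ (g ⋆ h)) ⋆ k) ≫ C :=
    α.hom_comp_genMul hC f (g ⋆ h) k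
  have inner_left : tensor.map (α.hom W X Y ×ₘ 𝟙 Z) ≫ ((f ⋆ (g ⋆ h)) ⋆ k) =
      (((f ⋆ g) ⋆ h) ⋆ k) ≫ C := by
    rw [map_comp_genMul, Category.id_comp, α.hom_comp_genMul hC, comp_genMul hleft]
  calc _ = tensor.map (α.hom W X Y ×ₘ 𝟙 Z) ≫ α.hom W (tensor.obj (X, Y)) Z ≫
        (f ⋆ ((g ⋆ h) ⋆ k)) ≫ C := by simp only [Category.assoc, inner_right]
    _ = tensor.map (α.hom W X Y ×ₘ 𝟙 Z) ≫ ((f ⋆ (g ⋆ h)) ⋆ k) ≫ C ≫ C := by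
        rw [← Category.assoc (α.hom _ _ _), outer, Category.assoc]
    _ = (((f ⋆ g) ⋆ h) ⋆ k) ≫ C ≫ C ≫ C := by
        rw [← Category.assoc, inner_left, Category.assoc]

theorem epi_of_genMul_comp_eq [IsSplitEpi θ] [Epi (α.hom P P P)]
    (hC : (θ ⋆ 𝟙 P) ≫ C = α.hom P P P ≫ (𝟙 P ⋆ θ)) : Epi C := by
  have : Epi ((θ ⋆ 𝟙 P) ≫ C) := by
    rw [hC]
    infer_instance
  exact epi_of_epi (θ ⋆ 𝟙 P) C

theorem comp_self_eq_comp_self_comp_self [IsSplitEpi θ]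
    (hC : (θ ⋆ 𝟙 P) ≫ C = α.hom P P P ≫ (𝟙 P ⋆ θ))
    (hleft : C ⋆ 𝟙 P = θ ≫ C) (hright : 𝟙 P ⋆ C = θ ≫ C) : C ≫ C = C ≫ C ≫ C := by
  rw [← cancel_epi (((𝟙 P ⋆ 𝟙 P) ⋆ 𝟙 P) ⋆ 𝟙 P), ← α.pentagon_two_edges_comp_genMul hC,
    α.pentagon, α.pentagon_three_edges_comp_genMul hC hleft hright]

end SkewAssociator

theorem idempotent_theorem_general (α : SkewAssociator tensor) [Epi (α.hom P P P)]
    (θ : tensor.obj (P, P) ⟶ P) [IsSplitEpi θ] (C : P ⟶ P)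
    (hC : tensor.map (θ ×ₘ 𝟙 P) ≫ θ ≫ C = α.hom P P P ≫ tensor.map (𝟙 P ×ₘ θ) ≫ θ)
    (hleft : tensor.map (C ×ₘ 𝟙 P) ≫ θ = θ ≫ C)
    (hright : tensor.map (𝟙 P ×ₘ C) ≫ θ = θ ≫ C) :
    C = 𝟙 P := by
  rw [← Category.assoc] at hC
  have : Epi C := α.epi_of_genMul_comp_eq hC
  have : C = C ≫ C := by
    rw [← cancel_epi C]
    exact α.comp_self_eq_comp_self_comp_self hC hleft hright
  rw [← cancel_epi C, Category.comp_id, ← this]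

end

theorem idempotent_theorem {𝒞 : Type u} [Category.{v} 𝒞]
    (tensor : 𝒞 × 𝒞 ⥤ 𝒞)
    (α : ∀ A B C : 𝒞, tensor.obj (tensor.obj (A, B), C) ≅ tensor.obj (A, tensor.obj (B, C)))
    (α_natural : ∀ {A B C A' B' C' : 𝒞} (f : A ⟶ A') (g : B ⟶ B') (h : C ⟶ C'),
      tensor.map ((tensor.map ((f, g) : (A, B) ⟶ (A', B')), h) :
          (tensor.obj (A, B), C) ⟶ (tensor.obj (A', B'), C')) ≫ (α A' B' C').hom =
        (α A B C).hom ≫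
          tensor.map ((f, tensor.map ((g, h) : (B, C) ⟶ (B', C'))) :
            (A, tensor.obj (B, C)) ⟶ (A', tensor.obj (B', C'))))
    (pentagon : ∀ A B C D : 𝒞,
      (α (tensor.obj (A, B)) C D).hom ≫ (α A B (tensor.obj (C, D))).hom =
        tensor.map (((α A B C).hom, 𝟙 D) :
            (tensor.obj (tensor.obj (A, B), C), D) ⟶ (tensor.obj (A, tensor.obj (B, C)), D)) ≫
          (α A (tensor.obj (B, C)) D).hom ≫
          tensor.map ((𝟙 A, (α B C D).hom) :
            (A, tensor.obj (tensor.obj (B, C), D)) ⟶ (A, tensor.obj (B, tensor.obj (C, D)))))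
    (P : 𝒞) (θ : tensor.obj (P, P) ≅ P) (C : P ⟶ P)
    (hC : tensor.map ((θ.hom, 𝟙 P) : (tensor.obj (P, P), P) ⟶ (P, P)) ≫ θ.hom ≫ C =
      (α P P P).hom ≫ tensor.map ((𝟙 P, θ.hom) : (P, tensor.obj (P, P)) ⟶ (P, P)) ≫ θ.hom)
    (hleft : tensor.map ((C, 𝟙 P) : (P, P) ⟶ (P, P)) ≫ θ.hom = θ.hom ≫ C)
    (hright : tensor.map ((𝟙 P, C) : (P, P) ⟶ (P, P)) ≫ θ.hom = θ.hom ≫ C) :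
    C = 𝟙 P := by
  exact idempotent_theorem_general ⟨fun A B C => (α A B C).hom, α_natural, pentagon⟩
    θ.hom C hC hleft hright
end

section
/- Let 𝒞 be a category, ⊗ : 𝒞 × 𝒞 → 𝒞 a functor, and α a natural isomorphism with components α_{A,B,C} : (A ⊗ B) ⊗ C ≅ A ⊗ (B ⊗ C) satisfying the pentagon identity. Let P be an object of 𝒞, θ : P ⊗ P ≅ P an isomorphism, and let C : P → P be the unique morphism satisfying C ∘ θ ∘ (θ ⊗ id_P) = θ ∘ (id_P ⊗ θ) ∘ α_{P,P,P}. If θ ∘ (C ⊗ id_P) = C ∘ θ and θ ∘ (id_P ⊗ C) = C ∘ θ, then C ∘ C ∘ C = C ∘ C (the identity C³ = C² derived from the pentagon coherence applied to the fourfold tensor power of P). -/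
/-!
STATEMENT 1: Let `𝒞` be a category, `⊗ : 𝒞 × 𝒞 ⥤ 𝒞` a functor ("operation"), `α` a
natural isomorphism `(A ⊗ B) ⊗ C ≅ A ⊗ (B ⊗ C)` satisfying the pentagon identity,
`(P, θ)` an idempotent, and `C : P ⟶ P` the morphism defined by the commutative diagram
`C ∘ θ ∘ (θ ⊗ id) = θ ∘ (id ⊗ θ) ∘ α`.  If `θ ∘ (C ⊗ id) = C ∘ θ` and
`θ ∘ (id ⊗ C) = C ∘ θ`, then `C ∘ C ∘ C = C ∘ C` (the identity `C³ = C²`).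
-/

open CategoryTheory

universe v u

/-!
Both paths of the pentagon on `P, P, P, P` carry the product `a(b(cd))` to a multiple of `((ab)c)d`.
Each of the five edges moves one pair of brackets and so composes the product with `C` exactly once:
on the three edges that are bare associators this is naturality, on the two whiskered ones it needs
`C` to pull out of a factor of `θ`. The short path has two edges and the long one three, so `C²` and
`C³` agree after `((ab)c)d`, which is an epimorphism.
-/

open scoped Prod

/-- A skew semigroupal category: a tensor product functor without unit, whose associator is natural
and satisfies the pentagon identity but need not be invertible. This is the structure against which
associativity of a product `P ⊗ P ⟶ P` is measured; naturality is stated componentwise. -/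
class SkewSemigroupal (𝒞 : Type u) [Category.{v} 𝒞] where
  tensor : 𝒞 × 𝒞 ⥤ 𝒞
  associator (A B C : 𝒞) :
    tensor.obj (tensor.obj (A, B), C) ⟶ tensor.obj (A, tensor.obj (B, C))
  associator_naturality {A B C A' B' C' : 𝒞} (f : A ⟶ A') (g : B ⟶ B') (h : C ⟶ C') :
    tensor.map (tensor.map (f ×ₘ g) ×ₘ h) ≫ associator A' B' C' =
      associator A B C ≫ tensor.map (f ×ₘ tensor.map (g ×ₘ h))
  pentagon (A B C D : 𝒞) :
    associator (tensor.obj (A, B)) C D ≫ associator A B (tensor.obj (C, D)) =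
      tensor.map (associator A B C ×ₘ 𝟙 D) ≫ associator A (tensor.obj (B, C)) D ≫
        tensor.map (𝟙 A ×ₘ associator B C D)

namespace SkewSemigroupal

variable {𝒞 : Type u} [Category.{v} 𝒞] [SkewSemigroupal 𝒞]

/-- The tensor product of objects, written `A ⊗ B`. -/
abbrev tensorObj (A B : 𝒞) : 𝒞 := tensor.obj (A, B)

local notation:70 A:71 " ⊗ " B:70 => tensorObj A B

/-- The morphism `f ⊗ id_B`, written `f ▷ B`. -/
def whiskerRight {A A' : 𝒞} (f : A ⟶ A') (B : 𝒞) : A ⊗ B ⟶ A' ⊗ B := tensor.map (f ×ₘ 𝟙 B)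

/-- The morphism `id_A ⊗ g`, written `A ◁ g`. -/
def whiskerLeft (A : 𝒞) {B B' : 𝒞} (g : B ⟶ B') : A ⊗ B ⟶ A ⊗ B' := tensor.map (𝟙 A ×ₘ g)

local notation:81 f:81 " ▷ " B:82 => whiskerRight f B
local notation:81 A:82 " ◁ " g:81 => whiskerLeft A g
local notation "α_" => associator

section Whiskering

variable {A A' A'' B B' B'' C C' : 𝒞}

lemma tensor_map_id (A B : 𝒞) : tensor.map (𝟙 A ×ₘ 𝟙 B) = 𝟙 (A ⊗ B) :=
  tensor.map_id (A, B)

lemma comp_whiskerRight (f : A ⟶ A') (f' : A' ⟶ A'') (B : 𝒞) :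
    (f ≫ f') ▷ B = f ▷ B ≫ f' ▷ B :=
  (Prod.sectL 𝒞 B ⋙ tensor).map_comp f f'

lemma whiskerLeft_comp (A : 𝒞) (g : B ⟶ B') (g' : B' ⟶ B'') :
    A ◁ (g ≫ g') = A ◁ g ≫ A ◁ g' :=
  (Prod.sectR A 𝒞 ⋙ tensor).map_comp g g'

instance isSplitEpi_whiskerRight (f : A ⟶ A') [IsSplitEpi f] (B : 𝒞) : IsSplitEpi (f ▷ B) :=
  inferInstanceAs (IsSplitEpi ((Prod.sectL 𝒞 B ⋙ tensor).map f))

lemma whisker_exchange (f : A ⟶ A') (g : B ⟶ B') : A ◁ g ≫ f ▷ B' = f ▷ B ≫ A' ◁ g := by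
  simp only [whiskerLeft, whiskerRight, ← Functor.map_comp, prod_comp, Category.id_comp,
    Category.comp_id]

lemma associator_naturality_left (f : A ⟶ A') (B C : 𝒞) :
    f ▷ B ▷ C ≫ α_ A' B C = α_ A B C ≫ f ▷ (B ⊗ C) := by
  simpa only [whiskerRight, tensor_map_id] using associator_naturality f (𝟙 B) (𝟙 C)

lemma associator_naturality_middle (A : 𝒞) (g : B ⟶ B') (C : 𝒞) :
    (A ◁ g) ▷ C ≫ α_ A B' C = α_ A B C ≫ A ◁ g ▷ C :=
  associator_naturality (𝟙 A) g (𝟙 C)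

lemma associator_naturality_right (A B : 𝒞) (h : C ⟶ C') :
    (A ⊗ B) ◁ h ≫ α_ A B C' = α_ A B C ≫ A ◁ B ◁ h := by
  simpa only [whiskerLeft, tensor_map_id] using associator_naturality (𝟙 A) (𝟙 B) h

end Whiskering

variable {P : 𝒞}

/-- The ternary product `(ab)c` of the binary product `θ`. -/
def mulLeft (θ : P ⊗ P ⟶ P) : (P ⊗ P) ⊗ P ⟶ P := θ ▷ P ≫ θ

/-- The ternary product `a(bc)` of the binary product `θ`. -/
def mulRight (θ : P ⊗ P ⟶ P) : P ⊗ P ⊗ P ⟶ P := P ◁ θ ≫ θ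

instance isSplitEpi_mulLeft (θ : P ⊗ P ⟶ P) [IsSplitEpi θ] : IsSplitEpi (mulLeft θ) :=
  inferInstanceAs (IsSplitEpi (θ ▷ P ≫ θ))

variable {θ : P ⊗ P ⟶ P} {C : P ⟶ P}

lemma associator_tensor_left_comp_mul (hC : mulLeft θ ≫ C = α_ P P P ≫ mulRight θ) :
    α_ (P ⊗ P) P P ≫ θ ▷ (P ⊗ P) ≫ mulRight θ = mulLeft θ ▷ P ≫ θ ≫ C := by
  calc α_ (P ⊗ P) P P ≫ θ ▷ (P ⊗ P) ≫ mulRight θ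
      = θ ▷ P ▷ P ≫ α_ P P P ≫ mulRight θ := by
        rw [← reassoc_of% associator_naturality_left θ P P]
    _ = θ ▷ P ▷ P ≫ mulLeft θ ≫ C := by rw [hC]
    _ = mulLeft θ ▷ P ≫ θ ≫ C := by simp only [mulLeft, comp_whiskerRight, Category.assoc]

lemma associator_tensor_middle_comp_mul (hC : mulLeft θ ≫ C = α_ P P P ≫ mulRight θ) :
    α_ P (P ⊗ P) P ≫ P ◁ mulLeft θ ≫ θ = mulRight θ ▷ P ≫ θ ≫ C := by
  calc α_ P (P ⊗ P) P ≫ P ◁ mulLeft θ ≫ θ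
      = α_ P (P ⊗ P) P ≫ P ◁ θ ▷ P ≫ mulRight θ := by
        simp only [mulLeft, mulRight, whiskerLeft_comp, Category.assoc]
    _ = (P ◁ θ) ▷ P ≫ α_ P P P ≫ mulRight θ := by
        rw [← reassoc_of% associator_naturality_middle P θ P]
    _ = (P ◁ θ) ▷ P ≫ mulLeft θ ≫ C := by rw [hC]
    _ = mulRight θ ▷ P ≫ θ ≫ C := by
        simp only [mulLeft, mulRight, comp_whiskerRight, Category.assoc]

lemma associator_tensor_right_comp_mul (hC : mulLeft θ ≫ C = α_ P P P ≫ mulRight θ) :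
    α_ P P (P ⊗ P) ≫ P ◁ mulRight θ ≫ θ = θ ▷ (P ⊗ P) ≫ mulRight θ ≫ C := by
  calc α_ P P (P ⊗ P) ≫ P ◁ mulRight θ ≫ θ
      = α_ P P (P ⊗ P) ≫ P ◁ P ◁ θ ≫ mulRight θ := by
        simp only [mulRight, whiskerLeft_comp, Category.assoc]
    _ = (P ⊗ P) ◁ θ ≫ α_ P P P ≫ mulRight θ := by
        rw [← reassoc_of% associator_naturality_right P P θ]
    _ = (P ⊗ P) ◁ θ ≫ mulLeft θ ≫ C := by rw [hC]
    _ = θ ▷ (P ⊗ P) ≫ mulRight θ ≫ C := by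
        simp only [mulLeft, mulRight, reassoc_of% whisker_exchange θ θ, Category.assoc]

lemma associator_whiskerRight_comp_mul (hC : mulLeft θ ≫ C = α_ P P P ≫ mulRight θ)
    (hleft : C ▷ P ≫ θ = θ ≫ C) :
    α_ P P P ▷ P ≫ mulRight θ ▷ P ≫ θ = mulLeft θ ▷ P ≫ θ ≫ C := by
  rw [← reassoc_of% comp_whiskerRight, ← hC, comp_whiskerRight, Category.assoc, hleft]

lemma whiskerLeft_associator_comp_mul (hC : mulLeft θ ≫ C = α_ P P P ≫ mulRight θ)
    (hright : P ◁ C ≫ θ = θ ≫ C) :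
    P ◁ α_ P P P ≫ P ◁ mulRight θ ≫ θ = P ◁ mulLeft θ ≫ θ ≫ C := by
  rw [← reassoc_of% whiskerLeft_comp, ← hC, whiskerLeft_comp, Category.assoc, hright]

lemma pentagon_short_path_comp_mul (hC : mulLeft θ ≫ C = α_ P P P ≫ mulRight θ) :
    (α_ (P ⊗ P) P P ≫ α_ P P (P ⊗ P)) ≫ P ◁ mulRight θ ≫ θ =
      mulLeft θ ▷ P ≫ θ ≫ C ≫ C := by
  rw [Category.assoc, associator_tensor_right_comp_mul hC,
    reassoc_of% associator_tensor_left_comp_mul hC]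

lemma pentagon_long_path_comp_mul (hC : mulLeft θ ≫ C = α_ P P P ≫ mulRight θ)
    (hleft : C ▷ P ≫ θ = θ ≫ C) (hright : P ◁ C ≫ θ = θ ≫ C) :
    (α_ P P P ▷ P ≫ α_ P (P ⊗ P) P ≫ P ◁ α_ P P P) ≫ P ◁ mulRight θ ≫ θ =
      mulLeft θ ▷ P ≫ θ ≫ C ≫ C ≫ C := by
  rw [Category.assoc, Category.assoc, whiskerLeft_associator_comp_mul hC hright,
    reassoc_of% associator_tensor_middle_comp_mul hC,
    reassoc_of% associator_whiskerRight_comp_mul hC hleft]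

theorem idempotent_C_cubed_eq_C_squared_general (θ : P ⊗ P ⟶ P) [IsSplitEpi θ] (C : P ⟶ P)
    (hC : mulLeft θ ≫ C = α_ P P P ≫ mulRight θ)
    (hleft : C ▷ P ≫ θ = θ ≫ C) (hright : P ◁ C ≫ θ = θ ≫ C) :
    C ≫ C ≫ C = C ≫ C := by
  rw [← cancel_epi θ, ← cancel_epi (mulLeft θ ▷ P)]
  calc mulLeft θ ▷ P ≫ θ ≫ C ≫ C ≫ C
      = (α_ P P P ▷ P ≫ α_ P (P ⊗ P) P ≫ P ◁ α_ P P P) ≫ P ◁ mulRight θ ≫ θ :=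
        (pentagon_long_path_comp_mul hC hleft hright).symm
    _ = (α_ (P ⊗ P) P P ≫ α_ P P (P ⊗ P)) ≫ P ◁ mulRight θ ≫ θ :=
        congrArg (· ≫ P ◁ mulRight θ ≫ θ) (pentagon P P P P).symm
    _ = mulLeft θ ▷ P ≫ θ ≫ C ≫ C := pentagon_short_path_comp_mul hC

end SkewSemigroupal

theorem idempotent_C_cubed_eq_C_squared {𝒞 : Type u} [Category.{v} 𝒞]
    (tensor : 𝒞 × 𝒞 ⥤ 𝒞)
    (α : ∀ A B C : 𝒞, tensor.obj (tensor.obj (A, B), C) ≅ tensor.obj (A, tensor.obj (B, C)))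
    (α_natural : ∀ {A B C A' B' C' : 𝒞} (f : A ⟶ A') (g : B ⟶ B') (h : C ⟶ C'),
      tensor.map ((tensor.map ((f, g) : (A, B) ⟶ (A', B')), h) :
          (tensor.obj (A, B), C) ⟶ (tensor.obj (A', B'), C')) ≫ (α A' B' C').hom =
        (α A B C).hom ≫
          tensor.map ((f, tensor.map ((g, h) : (B, C) ⟶ (B', C'))) :
            (A, tensor.obj (B, C)) ⟶ (A', tensor.obj (B', C'))))
    (pentagon : ∀ A B C D : 𝒞,
      (α (tensor.obj (A, B)) C D).hom ≫ (α A B (tensor.obj (C, D))).hom =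
        tensor.map (((α A B C).hom, 𝟙 D) :
            (tensor.obj (tensor.obj (A, B), C), D) ⟶ (tensor.obj (A, tensor.obj (B, C)), D)) ≫
          (α A (tensor.obj (B, C)) D).hom ≫
          tensor.map ((𝟙 A, (α B C D).hom) :
            (A, tensor.obj (tensor.obj (B, C), D)) ⟶ (A, tensor.obj (B, tensor.obj (C, D)))))
    (P : 𝒞) (θ : tensor.obj (P, P) ≅ P) (C : P ⟶ P)
    (hC : tensor.map ((θ.hom, 𝟙 P) : (tensor.obj (P, P), P) ⟶ (P, P)) ≫ θ.hom ≫ C =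
      (α P P P).hom ≫ tensor.map ((𝟙 P, θ.hom) : (P, tensor.obj (P, P)) ⟶ (P, P)) ≫ θ.hom)
    (hleft : tensor.map ((C, 𝟙 P) : (P, P) ⟶ (P, P)) ≫ θ.hom = θ.hom ≫ C)
    (hright : tensor.map ((𝟙 P, C) : (P, P) ⟶ (P, P)) ≫ θ.hom = θ.hom ≫ C) :
    C ≫ C ≫ C = C ≫ C := by
  let _ : SkewSemigroupal 𝒞 := ⟨tensor, fun A B C => (α A B C).hom, α_natural, pentagon⟩
  exact SkewSemigroupal.idempotent_C_cubed_eq_C_squared_general θ.hom C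
    ((Category.assoc _ _ _).trans hC) hleft hright
end

section
/- There exists a finite-dimensional complex irreducible representation π : H → GL(ℋ) such that π((0,z)) = ψ(z)·Id_ℋ for every z ∈ k, and any two such representations are isomorphic (the Stone–von Neumann theorem: the Heisenberg representation with central character ψ exists and is unique up to isomorphism). -/
open scoped BigOperators
attribute [local instance] Classical.propDecidable

variable {k : Type} [Field k] [Fintype k]
variable {V : Type} [AddCommGroup V] [Module k V] [Fintype V]

/-- Multiplication of the Heisenberg group `H = V × k`:
`(v,z)·(v',z') = (v + v', z + z' + (1/2) ω(v,v'))`. -/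
def hMul (ω : V →ₗ[k] V →ₗ[k] k) (x y : V × k) : V × k :=
  (x.1 + y.1, x.2 + y.2 + (2 : k)⁻¹ * ω x.1 y.1)

/-- Inversion in the Heisenberg group. -/
def hInv (ω : V →ₗ[k] V →ₗ[k] k) (x : V × k) : V × k :=
  (-x.1, -x.2 + (2 : k)⁻¹ * ω x.1 x.1)

/-- Right translation `(π(h)f)(h') = f(h'·h)` of functions on the Heisenberg group. -/
def rt (ω : V →ₗ[k] V →ₗ[k] k) (h : V × k) (f : V × k → ℂ) : V × k → ℂ :=
  fun x => f (hMul ω x h)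

/-- The model `ℂ(L\H, ψ)`: functions `f : H → ℂ` with `f((0,z)·(l,0)·h) = ψ(z)·f(h)`
for `z ∈ k`, `l ∈ L`. -/
noncomputable def model (ω : V →ₗ[k] V →ₗ[k] k) (L : Submodule k V) (ψ : k → ℂ) :
    Submodule ℂ (V × k → ℂ) where
  carrier := {f | ∀ z : k, ∀ l ∈ L, ∀ h : V × k,
    f (hMul ω ((0 : V), z) (hMul ω (l, (0 : k)) h)) = ψ z * f h}
  add_mem' := by
    intro f g hf hg z l hl h
    simp only [Pi.add_apply, hf z l hl h, hg z l hl h]; ring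
  zero_mem' := by intro z l hl h; simp
  smul_mem' := by
    intro c f hf z l hl h
    simp only [Pi.smul_apply, smul_eq_mul, hf z l hl h]; ring

/-- The space `ℂ(M\H/L, ψ)`: functions `K : H → ℂ` with
`K((0,z)·(m,0)·h·(l,0)) = ψ(z)·K(h)` for `z ∈ k`, `m ∈ M`, `l ∈ L`. -/
noncomputable def biModel (ω : V →ₗ[k] V →ₗ[k] k) (M L : Submodule k V) (ψ : k → ℂ) :
    Submodule ℂ (V × k → ℂ) where
  carrier := {f | ∀ z : k, ∀ m ∈ M, ∀ l ∈ L, ∀ h : V × k,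
    f (hMul ω (hMul ω (hMul ω ((0 : V), z) (m, (0 : k))) h) (l, (0 : k))) = ψ z * f h}
  add_mem' := by
    intro f g hf hg z m hm l hl h
    simp only [Pi.add_apply, hf z m hm l hl h, hg z m hm l hl h]; ring
  zero_mem' := by intro z m hm l hl h; simp
  smul_mem' := by
    intro c f hf z m hm l hl h
    simp only [Pi.smul_apply, smul_eq_mul, hf z m hm l hl h]; ring

/-- The averaging operator `F_{M,L}[f](h) = ∑_{m ∈ M} f((m,0)·h)`. -/
noncomputable def avg (ω : V →ₗ[k] V →ₗ[k] k) (M : Submodule k V) :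
    (V × k → ℂ) →ₗ[ℂ] (V × k → ℂ) where
  toFun f := fun h => ∑ m : M, f (hMul ω ((m : V), (0 : k)) h)
  map_add' f g := by funext h; simp [Finset.sum_add_distrib]
  map_smul' c f := by funext h; simp [Finset.mul_sum]

/-- Normalized convolution on the Heisenberg group:
`(K ∗ f)(h) = q^{-(n+1)} ∑_{h' ∈ H} K(h')·f(h'⁻¹·h)`. -/
noncomputable def conv (ω : V →ₗ[k] V →ₗ[k] k) (n : ℕ) (K f : V × k → ℂ) : V × k → ℂ :=
  fun h => ((Fintype.card k : ℂ))⁻¹ ^ (n + 1) * ∑ x : V × k, K x * f (hMul ω (hInv ω x) h)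

/-- The one-dimensional Gauss sum `G(ψ) = ∑_{z ∈ k} ψ(z²/2)`. -/
noncomputable def gaussSum' (ψ : k → ℂ) : ℂ := ∑ z : k, ψ ((2 : k)⁻¹ * z ^ 2)

/-- The normalization coefficient `A_{M°,L°} = (G(ψ)/q)ⁿ · σ((−1)^{n(n−1)/2} ω_∧(o_L,o_M))`,
with the orientations presented by bases and `ω_∧(o_L,o_M) = det (ω(bL i, bM j))_{ij}`,
and `σ` the Legendre (quadratic) character. -/
noncomputable def Acoef (ω : V →ₗ[k] V →ₗ[k] k) (ψ : k → ℂ) (n : ℕ)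
    {M L : Submodule k V} (bM : Module.Basis (Fin n) k M) (bL : Module.Basis (Fin n) k L) : ℂ :=
  (gaussSum' ψ / (Fintype.card k : ℂ)) ^ n *
    ((quadraticChar k ((-1 : k) ^ (n * (n - 1) / 2) *
      (Matrix.of fun i j => ω ((bL i : V)) ((bM j : V))).det) : ℤ) : ℂ)

/-- The symplectic group `Sp(V)` of linear automorphisms of `V` preserving `ω`. -/
def Sp (ω : V →ₗ[k] V →ₗ[k] k) : Subgroup (V ≃ₗ[k] V) where
  carrier := {g | ∀ u v : V, ω (g u) (g v) = ω u v}
  one_mem' := by intro u v; rfl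
  mul_mem' := by
    intro a b ha hb u v
    have h : ∀ x : V, (a * b) x = a (b x) := fun x => rfl
    rw [h, h, ha, hb]
  inv_mem' := by
    intro a ha u v
    have h1 : a (a⁻¹ u) = u := a.apply_symm_apply u
    have h2 : a (a⁻¹ v) = v := a.apply_symm_apply v
    have := ha (a⁻¹ u) (a⁻¹ v)
    rw [h1, h2] at this
    exact this.symm

/-- A nontrivial (nowhere-vanishing) additive character `ψ : k → ℂ*`. -/
def IsAddChar (ψ : k → ℂ) : Prop :=
  (∀ a b : k, ψ (a + b) = ψ a * ψ b) ∧ (∀ a : k, ψ a ≠ 0) ∧ (∃ a : k, ψ a ≠ 1)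

/-- `π` is a Heisenberg representation on `ℋ` with central character `ψ`:
a representation of `H = V × k` by linear maps, with the center acting by `ψ`,
which is irreducible. -/
def IsHeisenbergRep (ω : V →ₗ[k] V →ₗ[k] k) (ψ : k → ℂ)
    {ℋ : Type} [AddCommGroup ℋ] [Module ℂ ℋ] (π : V × k → (ℋ →ₗ[ℂ] ℋ)) : Prop :=
  π ((0 : V), (0 : k)) = LinearMap.id ∧
  (∀ x y : V × k, π (hMul ω x y) = (π x).comp (π y)) ∧
  (∀ z : k, π ((0 : V), z) = ψ z • LinearMap.id) ∧
  (∀ W : Submodule ℂ ℋ, (∀ x : V × k, ∀ w ∈ W, π x w ∈ W) → W = ⊥ ∨ W = ⊤)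

/-- The action `g_*` of a symplectic automorphism on functions on `H`, `(g_* f)(h) = f(g⁻¹·h)`. -/
def gstar (g : V ≃ₗ[k] V) (f : V × k → ℂ) : V × k → ℂ :=
  fun x => f (g.symm x.1, x.2)


/-!
The character `χ_ρ` of a representation of `H` with central character `ψ` vanishes off the center:
if `v ≠ 0`, then conjugation by a suitable `(u, 0)` multiplies `(v, z)` by a central element on
which `ψ` is not `1`. On the center it is `(dim ρ) ψ`, so two irreducible representations with
central character `ψ` have nonzero character pairing and are isomorphic by orthogonality of
characters. For existence, take an irreducible subrepresentation of the representation coinduced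
from `ψ`.
-/

open Module Representation

section Irreducible

variable {G K W : Type*} [Monoid G] [Field K] [AddCommGroup W] [Module K W]

theorem isIrreducible_iff_forall_invariant (ρ : Representation K G W) :
    ρ.IsIrreducible ↔ Nontrivial W ∧
      ∀ U : Submodule K W, (∀ g, ∀ w ∈ U, ρ g w ∈ U) → U = ⊥ ∨ U = ⊤ := by
  have eq_bot_iff_toSubmodule (σ : Subrepresentation ρ) : σ = ⊥ ↔ σ.toSubmodule = ⊥ :=
    Subrepresentation.toSubmodule_injective.eq_iff (b := ⊥).symm
  have eq_top_iff_toSubmodule (σ : Subrepresentation ρ) : σ = ⊤ ↔ σ.toSubmodule = ⊤ :=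
    Subrepresentation.toSubmodule_injective.eq_iff (b := ⊤).symm
  constructor
  · intro hρ
    refine ⟨?_, fun U hU => ?_⟩
    · rw [← Submodule.nontrivial_iff K, nontrivial_iff_exists_ne ⊥]
      exact ⟨⊤, fun h => top_ne_bot ((eq_bot_iff_toSubmodule ⊤).mpr h)⟩
    · rw [← eq_bot_iff_toSubmodule ⟨U, hU⟩, ← eq_top_iff_toSubmodule ⟨U, hU⟩]
      exact eq_bot_or_eq_top _
  · rintro ⟨hW, hinv⟩
    have : Nontrivial (Subrepresentation ρ) :=
      ⟨⊤, ⊥, fun h => top_ne_bot ((eq_bot_iff_toSubmodule ⊤).mp h)⟩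
    refine ⟨fun σ => ?_⟩
    rw [eq_bot_iff_toSubmodule, eq_top_iff_toSubmodule]
    exact hinv σ.toSubmodule σ.apply_mem_toSubmodule

theorem isIrreducible_toRepresentation_of_isAtom {ρ : Representation K G W}
    {σ : Subrepresentation ρ} (hσ : IsAtom σ) : σ.toRepresentation.IsIrreducible := by
  rw [isIrreducible_iff_forall_invariant, Submodule.nontrivial_iff_ne_bot]
  refine ⟨fun h => hσ.1 (Subrepresentation.toSubmodule_injective h), fun U hU => ?_⟩
  let τ : Subrepresentation ρ :=
    { toSubmodule := U.map σ.toSubmodule.subtype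
      apply_mem_toSubmodule := by
        rintro g _ ⟨w, hw, rfl⟩
        exact ⟨_, hU g w hw, rfl⟩ }
  have hτ : τ ≤ σ := Submodule.map_subtype_le σ.toSubmodule U
  have map_subtype_injective :=
    Submodule.map_injective_of_injective σ.toSubmodule.injective_subtype
  refine (hσ.le_iff.mp hτ).imp (fun h => ?_) fun h => ?_
  · exact map_subtype_injective
      ((congrArg Subrepresentation.toSubmodule h).trans (Submodule.map_bot _).symm)
  · exact map_subtype_injective
      ((congrArg Subrepresentation.toSubmodule h).trans (Submodule.map_subtype_top _).symm)

theorem exists_isIrreducible_subrepresentation [FiniteDimensional K W] [Nontrivial W]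
    (ρ : Representation K G W) :
    ∃ σ : Subrepresentation ρ, σ.toRepresentation.IsIrreducible := by
  have toSubmodule_strictMono :
      StrictMono (Subrepresentation.toSubmodule : Subrepresentation ρ → Submodule K W) :=
    fun _ _ h => h
  have := toSubmodule_strictMono.wellFoundedLT
  have : IsAtomic (Subrepresentation ρ) := isAtomic_of_orderBot_wellFounded_lt wellFounded_lt
  have : Nontrivial (Subrepresentation ρ) :=
    ⟨⊥, ⊤, fun h => bot_ne_top (congrArg Subrepresentation.toSubmodule h)⟩
  obtain ⟨σ, hσ⟩ := IsAtomic.exists_atom (Subrepresentation ρ)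
  exact ⟨σ, isIrreducible_toRepresentation_of_isAtom hσ⟩

end Irreducible

section CentralCharacter

universe u v

variable {A : Type*} {G : Type u} {K : Type v} {W W' : Type*}

/-- `ρ` has central character `χ` along `ι : A →* G` if each `ι a` acts as the scalar `χ a`. In the
intended use `ι` embeds `A` as a central subgroup, but neither injectivity nor centrality is part of
the definition. -/
def HasCentralCharacter [Monoid A] [Monoid G] [Semiring K] [AddCommMonoid W] [Module K W]
    (ι : A →* G) (χ : A →* K) (ρ : Representation K G W) : Prop :=
  ∀ a w, ρ (ι a) w = χ a • w

namespace HasCentralCharacter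

section Monoid

variable [Monoid A] [Monoid G] {ι : A →* G}

theorem toRepresentation [Semiring K] [AddCommMonoid W] [Module K W] {χ : A →* K}
    {ρ : Representation K G W} (hρ : HasCentralCharacter ι χ ρ) (σ : Subrepresentation ρ) :
    HasCentralCharacter ι χ σ.toRepresentation :=
  fun a w => Subtype.ext (hρ a w)

variable [Field K] [AddCommGroup W] [Module K W] {χ : A →* K} {ρ : Representation K G W}

theorem character_mul (hρ : HasCentralCharacter ι χ ρ) (a : A) (g : G) :
    ρ.character (ι a * g) = χ a * ρ.character g := by
  have : ρ (ι a * g) = χ a • ρ g := by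
    ext w
    rw [map_mul, Module.End.mul_apply, hρ, LinearMap.smul_apply]
  rw [character, this, map_smul, smul_eq_mul, character]

theorem character_apply [FiniteDimensional K W] (hρ : HasCentralCharacter ι χ ρ) (a : A) :
    ρ.character (ι a) = χ a * finrank K W := by
  simpa using hρ.character_mul a 1

end Monoid

section Group

variable [Group A] [Group G] [Field K] [AddCommGroup W] [Module K W]
  [AddCommGroup W'] [Module K W'] {ι : A →* G} {χ : A →* K}
  {ρ : Representation K G W} {σ : Representation K G W'}

theorem character_eq_zero_of_conj (hρ : HasCentralCharacter ι χ ρ) {g h : G} {a : A}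
    (hconj : h * g * h⁻¹ = ι a * g) (ha : χ a ≠ 1) : ρ.character g = 0 := by
  have : χ a * ρ.character g = ρ.character g := by
    rw [← hρ.character_mul, ← hconj, char_conj]
  exact (mul_left_eq_self₀.mp this).resolve_left ha

theorem sum_character_mul_character_inv [Fintype A] [Fintype G]
    [FiniteDimensional K W] [FiniteDimensional K W']
    (hρ : HasCentralCharacter ι χ ρ) (hσ : HasCentralCharacter ι χ σ) (hι : Function.Injective ι)
    (hvanish : ∀ g ∉ Set.range ι, ρ.character g = 0) :
    ∑ g, ρ.character g * σ.character g⁻¹ = Fintype.card A * (finrank K W * finrank K W') := by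
  have on_range (a : A) : ρ.character (ι a) * σ.character (ι a)⁻¹ = finrank K W * finrank K W' := by
    have : χ a * χ a⁻¹ = 1 := by rw [← map_mul, mul_inv_cancel, map_one]
    rw [← map_inv, hρ.character_apply, hσ.character_apply]
    linear_combination (finrank K W * finrank K W' : K) * this
  calc ∑ g, ρ.character g * σ.character g⁻¹
      = ∑ _a : A, (finrank K W * finrank K W' : K) :=
        (Fintype.sum_of_injective ι hι _ _ (fun g hg => by rw [hvanish g hg, zero_mul])
          fun a => (on_range a).symm).symm
    _ = Fintype.card A * (finrank K W * finrank K W') := by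
        rw [Finset.sum_const, Finset.card_univ, nsmul_eq_mul]

theorem nonempty_equiv [Finite G] [IsAlgClosed K] [CharZero K]
    [FiniteDimensional K W] [FiniteDimensional K W'] [ρ.IsIrreducible] [σ.IsIrreducible]
    (hρ : HasCentralCharacter ι χ ρ) (hσ : HasCentralCharacter ι χ σ)
    (hι : Function.Injective ι)
    (hconj : ∀ g ∉ Set.range ι, ∃ h a, h * g * h⁻¹ = ι a * g ∧ χ a ≠ 1) :
    Nonempty (σ.Equiv ρ) := by
  have := Fintype.ofFinite G
  have : Finite A := Finite.of_injective ι hι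
  have := Fintype.ofFinite A
  have card_G : (Nat.card G : K) ≠ 0 := Nat.cast_ne_zero.mpr Nat.card_pos.ne'
  have card_A : (Fintype.card A : K) ≠ 0 := Nat.cast_ne_zero.mpr Fintype.card_ne_zero
  have : Invertible (Nat.card G : K) := invertibleOfNonzero card_G
  have : Nontrivial W := ((isIrreducible_iff_forall_invariant ρ).mp inferInstance).1
  have : Nontrivial W' := ((isIrreducible_iff_forall_invariant σ).mp inferInstance).1
  have finrank_W : (finrank K W : K) ≠ 0 := Nat.cast_ne_zero.mpr finrank_pos.ne'
  have finrank_W' : (finrank K W' : K) ≠ 0 := Nat.cast_ne_zero.mpr finrank_pos.ne'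
  have hvanish : ∀ g ∉ Set.range ι, ρ.character g = 0 := fun g hg =>
    let ⟨_, _, hga, ha⟩ := hconj g hg
    hρ.character_eq_zero_of_conj hga ha
  by_contra hne
  have orthogonal := char_orthonormal ρ σ
  rw [if_neg hne, hρ.sum_character_mul_character_inv hσ hι hvanish] at orthogonal
  exact mul_ne_zero (inv_ne_zero card_G) (mul_ne_zero card_A (mul_ne_zero finrank_W finrank_W'))
    orthogonal

end Group

end HasCentralCharacter

/-- The one-dimensional representation on which `A` acts by the character `χ`. -/
def scalarRepresentation [Monoid A] [CommSemiring K] (χ : A →* K) : Representation K A K :=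
  (algebraMap K (Module.End K K) : K →* Module.End K K).comp χ

theorem hasCentralCharacter_coind [Monoid A] [Monoid G] [CommSemiring K] {ι : A →* G}
    (hcentral : ∀ a g, Commute (ι a) g) (χ : A →* K) :
    HasCentralCharacter ι χ (coind ι (scalarRepresentation χ)) := by
  intro a f
  ext g
  calc (coind ι (scalarRepresentation χ) (ι a) f).1 g
      = f.1 (ι a * g) := by rw [(hcentral a g).eq]; rfl
    _ = χ a • f.1 g := f.2 a g

theorem nontrivial_coindV_scalarRepresentation [Group A] [Group G] [CommSemiring K] [Nontrivial K]
    {ι : A →* G} (hι : Function.Injective ι) (χ : A →* K) :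
    Nontrivial (coindV ι (scalarRepresentation χ)) := by
  let f : G → K := Function.extend ι χ 0
  have f_range (a : A) : f (ι a) = χ a := hι.extend_apply χ 0 a
  have f_compl (g : G) (hg : g ∉ Set.range ι) : f g = 0 := Function.extend_apply' χ (0 : G → K) g hg
  have hf : f ∈ coindV ι (scalarRepresentation χ) := by
    intro a g
    by_cases hg : g ∈ Set.range ι
    · obtain ⟨b, rfl⟩ := hg
      rw [← map_mul, f_range, f_range, map_mul]
      rfl
    · have : ι a * g ∉ Set.range ι := fun ⟨b, hb⟩ =>
        hg ⟨a⁻¹ * b, by rw [map_mul, map_inv, hb, inv_mul_cancel_left]⟩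
      rw [f_compl g hg, f_compl _ this]
      exact (map_zero _).symm
  refine nontrivial_of_ne ⟨f, hf⟩ 0 fun h => ?_
  have : f (ι 1) = 0 := congrFun (congrArg Subtype.val h) (ι 1)
  rw [f_range, map_one] at this
  exact one_ne_zero this

theorem exists_isIrreducible_hasCentralCharacter [Group A] [Group G] [Finite G] [Field K]
    {ι : A →* G} (hι : Function.Injective ι) (hcentral : ∀ a g, Commute (ι a) g) (χ : A →* K) :
    ∃ (W : Type (max u v)) (_ : AddCommGroup W) (_ : Module K W) (ρ : Representation K G W),
      FiniteDimensional K W ∧ ρ.IsIrreducible ∧ HasCentralCharacter ι χ ρ := by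
  have := nontrivial_coindV_scalarRepresentation hι χ
  obtain ⟨σ, hσ⟩ := exists_isIrreducible_subrepresentation (coind ι (scalarRepresentation χ))
  exact ⟨σ.toSubmodule, inferInstance, inferInstance, σ.toRepresentation, inferInstance, hσ,
    (hasCentralCharacter_coind hcentral χ).toRepresentation σ⟩

end CentralCharacter

section Heisenberg

variable {F E : Type} [Field F] [AddCommGroup E] [Module F E]

section Mul

variable (ω : E →ₗ[F] E →ₗ[F] F)

theorem hMul_assoc (x y z : E × F) : hMul ω (hMul ω x y) z = hMul ω x (hMul ω y z) := by
  ext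
  · exact add_assoc x.1 y.1 z.1
  · simp only [hMul, map_add, LinearMap.add_apply]
    ring

theorem zero_hMul (x : E × F) : hMul ω 0 x = x := by
  simp [hMul]

theorem hInv_hMul (x : E × F) : hMul ω (hInv ω x) x = 0 := by
  simp [hMul, hInv]

theorem hMul_eq_hMul_swap (x y : E × F) :
    hMul ω x y = hMul ω (0, 2⁻¹ * (ω x.1 y.1 - ω y.1 x.1)) (hMul ω y x) := by
  ext
  · exact (add_comm x.1 y.1).trans (zero_add _).symm
  · simp only [hMul, map_zero, LinearMap.zero_apply]
    ring

theorem zero_mk_hMul_comm (a : F) (x : E × F) : hMul ω (0, a) x = hMul ω x (0, a) := by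
  simp [hMul, add_comm]

end Mul

/-- The Heisenberg group of a bilinear form `ω`: the set `E × F` with the multiplication `hMul ω`.
The form is recorded in the type so that the group structure can be an instance. -/
def HeisenbergGroup (_ω : E →ₗ[F] E →ₗ[F] F) : Type := E × F

namespace HeisenbergGroup

variable {ω : E →ₗ[F] E →ₗ[F] F}

instance : Mul (HeisenbergGroup ω) := ⟨hMul ω⟩

instance : One (HeisenbergGroup ω) := ⟨(0 : E × F)⟩

instance : Inv (HeisenbergGroup ω) := ⟨hInv ω⟩

instance : Group (HeisenbergGroup ω) :=
  Group.ofLeftAxioms (hMul_assoc ω) (zero_hMul ω) (hInv_hMul ω)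

instance [Finite E] [Finite F] : Finite (HeisenbergGroup ω) :=
  inferInstanceAs (Finite (E × F))

variable (ω) in
/-- The embedding `z ↦ (0, z)` of the additive group of `F` as a central subgroup of the Heisenberg
group; it is the whole center when `ω` is symplectic and `2 ≠ 0`. -/
def centerHom : Multiplicative F →* HeisenbergGroup ω where
  toFun z := ((0 : E), z.toAdd)
  map_one' := rfl
  map_mul' a b := by
    change _ = hMul ω (0, a.toAdd) (0, b.toAdd)
    simp [hMul]

theorem centerHom_injective : Function.Injective (centerHom ω) :=
  fun _ _ h => congrArg Prod.snd h

theorem centerHom_commute (a : Multiplicative F) (g : HeisenbergGroup ω) :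
    Commute (centerHom ω a) g :=
  zero_mk_hMul_comm ω a.toAdd g

theorem mem_range_centerHom_of_fst_eq_zero {g : HeisenbergGroup ω} (hg : g.1 = 0) :
    g ∈ Set.range (centerHom ω) :=
  ⟨.ofAdd g.2, Prod.ext hg.symm rfl⟩

theorem conj_eq (h g : HeisenbergGroup ω) :
    h * g * h⁻¹ = centerHom ω (.ofAdd (2⁻¹ * (ω h.1 g.1 - ω g.1 h.1))) * g := by
  rw [mul_inv_eq_iff_eq_mul, mul_assoc]
  exact hMul_eq_hMul_swap ω h g

theorem exists_conj_eq_centerHom_mul {M : Type*} [CommMonoid M] (h_two : (2 : F) ≠ 0)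
    (halt : ω.IsAlt) (hsep : ω.SeparatingLeft) {ψ : AddChar F M} (hψ : ψ ≠ 1)
    {g : HeisenbergGroup ω} (hg : g ∉ Set.range (centerHom ω)) :
    ∃ h a, h * g * h⁻¹ = centerHom ω a * g ∧ ψ.toMonoidHom a ≠ 1 := by
  obtain ⟨a, ha⟩ := AddChar.ne_one_iff.mp hψ
  have ω_g_ne_zero : ω g.1 ≠ 0 := fun h =>
    hg (mem_range_centerHom_of_fst_eq_zero (hsep g.1 (LinearMap.congr_fun h)))
  obtain ⟨u, hu⟩ := LinearMap.surjective ω_g_ne_zero (-a)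
  refine ⟨((u, 0) : E × F), .ofAdd a, ?_, ha⟩
  have commutator : 2⁻¹ * (ω u g.1 - ω g.1 u) = a := by
    rw [← halt.neg, hu]
    field_simp
    ring
  exact (conj_eq _ g).trans (congrArg (fun z => centerHom ω (.ofAdd z) * g) commutator)

end HeisenbergGroup

/-- The bundled form of a character `ψ : F → ℂ` satisfying `IsAddChar`. -/
def IsAddChar.toAddChar {ψ : F → ℂ} (hψ : IsAddChar ψ) : AddChar F ℂ where
  toFun := ψ
  map_zero_eq_one' := by simpa [hψ.2.1 0] using hψ.1 0 0
  map_add_eq_mul' := hψ.1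

theorem IsAddChar.toAddChar_ne_one {ψ : F → ℂ} (hψ : IsAddChar ψ) : hψ.toAddChar ≠ 1 :=
  AddChar.ne_one_iff.mpr hψ.2.2

variable {ω : E →ₗ[F] E →ₗ[F] F} {ψ : F → ℂ} {ℋ : Type} [AddCommGroup ℋ] [Module ℂ ℋ]

/-- The bundled form of a family of operators satisfying `IsHeisenbergRep`. -/
def IsHeisenbergRep.toRepresentation {π : E × F → ℋ →ₗ[ℂ] ℋ} (hπ : IsHeisenbergRep ω ψ π) :
    Representation ℂ (HeisenbergGroup ω) ℋ where
  toFun := π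
  map_one' := hπ.1
  map_mul' := hπ.2.1

theorem isHeisenbergRep_iff (hψ : IsAddChar ψ) (ρ : Representation ℂ (HeisenbergGroup ω) ℋ) :
    Nontrivial ℋ ∧ IsHeisenbergRep ω ψ ρ ↔
      ρ.IsIrreducible ∧
        HasCentralCharacter (HeisenbergGroup.centerHom ω) hψ.toAddChar.toMonoidHom ρ := by
  rw [isIrreducible_iff_forall_invariant]
  constructor
  · rintro ⟨hnontrivial, -, -, hcenter, hinv⟩
    exact ⟨⟨hnontrivial, hinv⟩, fun z => LinearMap.congr_fun (hcenter z.toAdd)⟩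
  · rintro ⟨⟨hnontrivial, hinv⟩, hcenter⟩
    exact ⟨hnontrivial, map_one ρ, map_mul ρ, fun z => LinearMap.ext (hcenter (.ofAdd z)), hinv⟩

end Heisenberg

/-- the Stone–von Neumann theorem.  There exists a finite-dimensional complex
irreducible representation `π : H → GL(ℋ)` with `π((0,z)) = ψ(z)·Id`, and any two such
representations are isomorphic. -/
theorem stone_von_neumann
    (ω : V →ₗ[k] V →ₗ[k] k) (n : ℕ)
    (hchar : ringChar k ≠ 2)
    (hdim : Module.finrank k V = 2 * n)
    (halt : ∀ v : V, ω v v = 0)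
    (hnd : ∀ v : V, (∀ u : V, ω v u = 0) → v = 0)
    (ψ : k → ℂ) (hψ : IsAddChar ψ)
    :
    (∃ (ℋ : Type) (_ : AddCommGroup ℋ) (_ : Module ℂ ℋ),
        Nontrivial ℋ ∧ FiniteDimensional ℂ ℋ ∧
        ∃ π : V × k → (ℋ →ₗ[ℂ] ℋ), IsHeisenbergRep ω ψ π) ∧
    (∀ (ℋ₁ : Type) [AddCommGroup ℋ₁] [Module ℂ ℋ₁] [FiniteDimensional ℂ ℋ₁]
        (ℋ₂ : Type) [AddCommGroup ℋ₂] [Module ℂ ℋ₂] [FiniteDimensional ℂ ℋ₂]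
        (π₁ : V × k → (ℋ₁ →ₗ[ℂ] ℋ₁)) (π₂ : V × k → (ℋ₂ →ₗ[ℂ] ℋ₂)),
        Nontrivial ℋ₁ → Nontrivial ℋ₂ →
        IsHeisenbergRep ω ψ π₁ → IsHeisenbergRep ω ψ π₂ →
        ∃ T : ℋ₁ ≃ₗ[ℂ] ℋ₂, ∀ (x : V × k) (v : ℋ₁), T (π₁ x v) = π₂ x (T v)) := by
  constructor
  · obtain ⟨ℋ, _, _, ρ, hfin, hρ⟩ := exists_isIrreducible_hasCentralCharacter
      HeisenbergGroup.centerHom_injective (HeisenbergGroup.centerHom_commute (ω := ω))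
      hψ.toAddChar.toMonoidHom
    obtain ⟨hnontrivial, hheis⟩ := (isHeisenbergRep_iff hψ ρ).mpr hρ
    exact ⟨ℋ, _, _, hnontrivial, hfin, ρ, hheis⟩
  · intro ℋ₁ _ _ _ ℋ₂ _ _ _ π₁ π₂ h₁ h₂ hπ₁ hπ₂
    obtain ⟨irreducible₁, central₁⟩ := (isHeisenbergRep_iff hψ hπ₁.toRepresentation).mp ⟨h₁, hπ₁⟩
    obtain ⟨irreducible₂, central₂⟩ := (isHeisenbergRep_iff hψ hπ₂.toRepresentation).mp ⟨h₂, hπ₂⟩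
    obtain ⟨T⟩ := central₂.nonempty_equiv central₁ HeisenbergGroup.centerHom_injective fun _ =>
      HeisenbergGroup.exists_conj_eq_centerHom_mul (Ring.two_ne_zero hchar) halt hnd
        hψ.toAddChar_ne_one
    exact ⟨T.toLinearEquiv, T.toIntertwiningMap.isIntertwining⟩
end

section
/- Let g ∈ Sp(V) act on H by g·(v,z) = (g v, z) and on oriented Lagrangians by g·(L, o_L) = (gL, (Λⁿ g)(o_L)). For a Lagrangian L, let g_* : ℂ(L\H, ψ) → ℂ(gL\H, ψ) be the isomorphism (g_* f)(h) = f(g⁻¹·h). Then for any oriented Lagrangians M° = (M, o_M), L° = (L, o_L) with L + M = V: (i) A_{g·M°, g·L°} = A_{M°,L°}; (ii) g_* ∘ F_{M°,L°} = F_{g·M°, g·L°} ∘ g_*; and hence g_* ∘ (A_{M°,L°}·F_{M°,L°}) = (A_{g·M°,g·L°}·F_{g·M°,g·L°}) ∘ g_* (Sp(V)-equivariance of the canonical intertwining operators on general-position pairs). -/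
open scoped BigOperators
attribute [local instance] Classical.propDecidable

variable {k : Type} [Field k] [Fintype k]
variable {V : Type} [AddCommGroup V] [Module k V] [Fintype V]

/-!
An isometry `g` acts on the Heisenberg group by automorphisms, so that
`g·((m,0)·h) = (g m,0)·(g·h)`; reindexing the sum over `M` along `g : M ≃ gM` carries `F_{M°,L°}`
to `F_{g·M°,g·L°}`. The coefficient `A_{M°,L°}` sees the orientations only through the values of
`ω`, which `g` preserves.
-/

section WedgePairing

variable {R E F ι : Type*} [CommRing R] [AddCommGroup E] [Module R E] [AddCommGroup F] [Module R F]
  [Fintype ι] [DecidableEq ι]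

/-- The pairing `ω_∧` induced by `ω` on exterior powers, on the decomposable vectors
`v₁ ∧ ⋯ ∧ vₙ` and `w₁ ∧ ⋯ ∧ wₙ`: the determinant of the matrix `ω(vᵢ, wⱼ)`. -/
def wedgePairing (ω : E →ₗ[R] E →ₗ[R] R) (v w : ι → E) : R :=
  (Matrix.of fun i j => ω (v i) (w j)).det

theorem wedgePairing_comp {ω : E →ₗ[R] E →ₗ[R] R} {η : F →ₗ[R] F →ₗ[R] R} {φ : E → F}
    (hφ : ∀ u v, η (φ u) (φ v) = ω u v) (v w : ι → E) :
    wedgePairing η (φ ∘ v) (φ ∘ w) = wedgePairing ω v w := by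
  simp only [wedgePairing, Function.comp_apply, hφ]

end WedgePairing

omit [Fintype V] in
theorem Acoef_eq_wedgePairing (ω : V →ₗ[k] V →ₗ[k] k) (ψ : k → ℂ) {n : ℕ} {M L : Submodule k V}
    (bM : Module.Basis (Fin n) k M) (bL : Module.Basis (Fin n) k L) :
    Acoef ω ψ n bM bL = (gaussSum' ψ / (Fintype.card k : ℂ)) ^ n *
      ((quadraticChar k ((-1 : k) ^ (n * (n - 1) / 2) *
        wedgePairing ω (fun i => (bL i : V)) (fun j => (bM j : V))) : ℤ) : ℂ) :=
  rfl

omit [Fintype V] in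
theorem Acoef_map {ω : V →ₗ[k] V →ₗ[k] k} {g : V ≃ₗ[k] V} (hg : g ∈ Sp ω) (ψ : k → ℂ) {n : ℕ}
    {M L : Submodule k V} (bM : Module.Basis (Fin n) k M) (bL : Module.Basis (Fin n) k L) :
    Acoef ω ψ n (bM.map (g.submoduleMap M)) (bL.map (g.submoduleMap L)) = Acoef ω ψ n bM bL := by
  have hpair : wedgePairing ω (fun i => (bL.map (g.submoduleMap L) i : V))
      (fun j => (bM.map (g.submoduleMap M) j : V)) =
      wedgePairing ω (fun i => (bL i : V)) (fun j => (bM j : V)) :=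
    wedgePairing_comp hg _ _
  rw [Acoef_eq_wedgePairing, hpair, Acoef_eq_wedgePairing]

omit [Fintype k] [Fintype V] in
theorem hMul_prodMap {W : Type} [AddCommGroup W] [Module k W] {ω : V →ₗ[k] V →ₗ[k] k}
    {η : W →ₗ[k] W →ₗ[k] k} {φ : V →ₗ[k] W} (hφ : ∀ u v, η (φ u) (φ v) = ω u v) (x y : V × k) :
    hMul η (Prod.map φ id x) (Prod.map φ id y) = Prod.map φ id (hMul ω x y) := by
  simp only [hMul, Prod.map_fst, Prod.map_snd, Prod.map_apply, id_eq, map_add, hφ]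

omit [Fintype k] [Fintype V] in
theorem gstar_prodMap (g : V ≃ₗ[k] V) (f : V × k → ℂ) (x : V × k) :
    gstar g f (Prod.map g id x) = f x := by
  simp only [gstar, Prod.map_fst, Prod.map_snd, id_eq, LinearEquiv.symm_apply_apply]

omit [Fintype k] [Fintype V] in
theorem gstar_smul (g : V ≃ₗ[k] V) (c : ℂ) (f : V × k → ℂ) :
    gstar g (c • f) = c • gstar g f :=
  rfl

omit [Fintype k] in
theorem gstar_avg {ω : V →ₗ[k] V →ₗ[k] k} {g : V ≃ₗ[k] V} (hg : g ∈ Sp ω) (M : Submodule k V)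
    (f : V × k → ℂ) :
    gstar g (avg ω M f) = avg ω (M.map (g : V →ₗ[k] V)) (gstar g f) := by
  funext x
  obtain ⟨h, rfl⟩ : ∃ h, Prod.map g id h = x := g.surjective.prodMap Function.surjective_id x
  have hact (m : V) : f (hMul ω (m, 0) h) = gstar g f (hMul ω (g m, 0) (Prod.map g id h)) := by
    rw [← gstar_prodMap g f]
    exact congrArg (gstar g f) (hMul_prodMap (φ := (g : V →ₗ[k] V)) hg (m, 0) h).symm
  calc gstar g (avg ω M f) (Prod.map g id h)
      = ∑ m : M, f (hMul ω (m, 0) h) := gstar_prodMap g _ h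
    _ = ∑ m : M, gstar g f (hMul ω (g m, 0) (Prod.map g id h)) :=
        Fintype.sum_congr _ _ fun m => hact m
    _ = ∑ m' : M.map (g : V →ₗ[k] V), gstar g f (hMul ω (m', 0) (Prod.map g id h)) :=
        (g.submoduleMap M).toEquiv.sum_comp fun m' => gstar g f (hMul ω (m', 0) (Prod.map g id h))

theorem sp_equivariance_general
    (ω : V →ₗ[k] V →ₗ[k] k) (n : ℕ) (_hchar : ringChar k ≠ 2) (ψ : k → ℂ)
    (g : V ≃ₗ[k] V) (hg : ∀ u v : V, ω (g u) (g v) = ω u v)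
    (M L : Submodule k V) (bM : Module.Basis (Fin n) k M) (bL : Module.Basis (Fin n) k L) :
    Acoef ω ψ n (bM.map (g.submoduleMap M)) (bL.map (g.submoduleMap L)) =
        Acoef ω ψ n bM bL ∧
    (∀ f : V × k → ℂ,
        gstar g (avg ω M f) = avg ω (M.map (g : V →ₗ[k] V)) (gstar g f)) ∧
    (∀ f : V × k → ℂ,
        gstar g (Acoef ω ψ n bM bL • avg ω M f) =
          Acoef ω ψ n (bM.map (g.submoduleMap M)) (bL.map (g.submoduleMap L)) •
            avg ω (M.map (g : V →ₗ[k] V)) (gstar g f)) := by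
  refine ⟨Acoef_map hg ψ bM bL, gstar_avg hg M, fun f => ?_⟩
  rw [gstar_smul, gstar_avg hg, Acoef_map hg]

/-- `Sp(V)`-equivariance of the canonical intertwining operators on pairs of
oriented Lagrangians in general position: the normalization coefficients are invariant and
`g_* ∘ F_{M°,L°} = F_{g·M°,g·L°} ∘ g_*`. -/
theorem sp_equivariance
    (ω : V →ₗ[k] V →ₗ[k] k) (n : ℕ)
    (hchar : ringChar k ≠ 2)
    (hdim : Module.finrank k V = 2 * n)
    (halt : ∀ v : V, ω v v = 0)
    (hnd : ∀ v : V, (∀ u : V, ω v u = 0) → v = 0)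
    (ψ : k → ℂ) (hψ : IsAddChar ψ)
    (g : V ≃ₗ[k] V) (hg : ∀ u v : V, ω (g u) (g v) = ω u v)
    (M L : Submodule k V) (bM : Module.Basis (Fin n) k M) (bL : Module.Basis (Fin n) k L)
    (hMiso : ∀ x ∈ M, ∀ y ∈ M, ω x y = 0) (hMrank : Module.finrank k M = n)
    (hLiso : ∀ x ∈ L, ∀ y ∈ L, ω x y = 0) (hLrank : Module.finrank k L = n)
    (hgen : L ⊔ M = ⊤) :
    Acoef ω ψ n (bM.map (g.submoduleMap M)) (bL.map (g.submoduleMap L)) =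
        Acoef ω ψ n bM bL ∧
    (∀ f ∈ model ω L ψ,
        gstar g (avg ω M f) = avg ω (M.map (g : V →ₗ[k] V)) (gstar g f)) ∧
    (∀ f ∈ model ω L ψ,
        gstar g (Acoef ω ψ n bM bL • avg ω M f) =
          Acoef ω ψ n (bM.map (g.submoduleMap M)) (bL.map (g.submoduleMap L)) •
            avg ω (M.map (g : V →ₗ[k] V)) (gstar g f)) := by
  obtain ⟨hA, hF, hAF⟩ := sp_equivariance_general ω n hchar ψ g hg M L bM bL
  exact ⟨hA, fun f _ => hF f, fun f _ => hAF f⟩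
end

section
/- Let (π, ℋ) be the Heisenberg representation with central character ψ and let ρ : Sp(V) → GL(ℋ) be a group homomorphism satisfying ρ(g) ∘ π(h) ∘ ρ(g)⁻¹ = π(g·h) for all g ∈ Sp(V), h ∈ H, with kernel K(g, v) = (dim ℋ)⁻¹ · Tr(ρ(g) ∘ π((v,0))⁻¹). Then K satisfies the convolution property: for all g₁, g₂ ∈ Sp(V) and v ∈ V, Σ_{u∈V} K(g₁, u) · K(g₂, v − u) · ψ((1/2)·ω(u, v)) = K(g₁g₂, v); i.e., K(g₁,·) ∗ K(g₂,·) = K(g₁g₂,·) for the twisted convolution on ℂ(V) induced from convolution on the Heisenberg group. -/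
open scoped BigOperators
attribute [local instance] Classical.propDecidable

variable {k : Type} [Field k] [Fintype k]
variable {V : Type} [AddCommGroup V] [Module k V] [Fintype V]

/-!
The operators `π (v, 0)` form a basis of `End ℋ`, whose dual basis for the trace form is
`(dim ℋ)⁻¹ π (-v, 0)`. Indeed they span `End ℋ` by Burnside's theorem, since `π` is irreducible;
and for `v ≠ 0` the operator `π (v, 0)` has trace zero, since conjugation by a suitable `π (w, 0)`
multiplies it by a scalar `ψ (±ω v w) ≠ 1`. Expanding `A` in this basis inside
`Tr (A B π (-v, 0))` shows that `A ↦ (dim ℋ)⁻¹ Tr (A π (v, 0)⁻¹)` turns composition of arbitrary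
operators on `ℋ` into twisted convolution. The Weil kernels are the images of the operators `ρ g`.
-/

section BurnsideTheorem

variable {F E : Type*} [Field F] [IsAlgClosed F] [AddCommGroup E] [Module F E]
  [FiniteDimensional F E]

theorem subalgebra_end_eq_top_of_isSimpleModule (A : Subalgebra F (Module.End F E))
    [IsSimpleModule A E] : A = ⊤ := by
  have scalar : ∀ D : Module.End A E, ∃ c : F, ∀ x, D x = c • x := fun D ↦ by
    obtain ⟨c, rfl⟩ := (IsSimpleModule.algebraMap_end_bijective_of_isAlgClosed F).2 D
    exact ⟨c, fun _ ↦ rfl⟩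
  rw [eq_top_iff]
  intro f _
  let f' : Module.End (Module.End A E) E :=
    { toFun := f
      map_add' := map_add f
      map_smul' := fun D x ↦ by
        obtain ⟨c, hc⟩ := scalar D
        simp only [Module.End.smul_def, hc, map_smul, RingHom.id_apply] }
  obtain ⟨s, hs⟩ := Module.Finite.fg_top (R := F) (M := E)
  obtain ⟨a, ha⟩ := jacobson_density f' s
  have hfa : f = a := LinearMap.ext_on hs ha
  exact hfa ▸ a.2

theorem span_submonoid_end_eq_top_of_irreducible [Nontrivial E] (S : Submonoid (Module.End F E))
    (hS : ∀ W : Submodule F E, (∀ s ∈ S, ∀ w ∈ W, s w ∈ W) → W = ⊥ ∨ W = ⊤) :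
    Submodule.span F (S : Set (Module.End F E)) = ⊤ := by
  let A := Algebra.adjoin F (S : Set (Module.End F E))
  have : IsSimpleModule A E := by
    rw [isSimpleModule_iff]
    refine { eq_bot_or_eq_top := fun W ↦ ?_ }
    have hW := hS (W.restrictScalars F) fun s hs w hw ↦
      W.smul_mem ⟨s, Algebra.subset_adjoin hs⟩ hw
    simpa only [Submodule.restrictScalars_eq_bot_iff, Submodule.restrictScalars_eq_top_iff]
      using hW
  have hA : Subalgebra.toSubmodule A = Submodule.span F S := by
    rw [Algebra.adjoin_eq_span, Submonoid.closure_eq]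
  rw [← hA, subalgebra_end_eq_top_of_isSimpleModule A, Algebra.top_toSubmodule]

end BurnsideTheorem

section TraceForm

open LinearMap (trace)

variable {R M : Type*} [CommRing R] [AddCommGroup M] [Module R M]

theorem trace_eq_zero_of_mul_eq_smul_mul [IsDomain R] {S T : Module.End R M} {c : R}
    (hS : IsUnit S) (hc : c ≠ 1) (h : T * S = c • (S * T)) : trace R M T = 0 := by
  obtain ⟨s, rfl⟩ := hS
  have htrace : trace R M T = c * trace R M T := by
    calc trace R M T = trace R M (T * s * ↑s⁻¹) := by rw [mul_assoc, s.mul_inv, mul_one]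
      _ = c * trace R M (s * T * ↑s⁻¹) := by rw [h, smul_mul_assoc, map_smul, smul_eq_mul]
      _ = c * trace R M T := by rw [LinearMap.trace_conj]
  exact (mul_eq_zero.mp (by linear_combination -htrace : (c - 1) * trace R M T = 0)).resolve_left
    (sub_ne_zero.mpr hc)

variable {ι : Type*} [Fintype ι] [DecidableEq ι] {W W' : ι → Module.End R M} {c : R}

theorem sum_trace_mul_smul_eq_smul (hspan : Submodule.span R (Set.range W) = ⊤)
    (hdual : ∀ i j, trace R M (W i * W' j) = if i = j then c else 0) (A : Module.End R M) :
    ∑ i, trace R M (A * W' i) • W i = c • A := by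
  induction (hspan ▸ Submodule.mem_top : A ∈ Submodule.span R (Set.range W))
    using Submodule.span_induction with
  | mem _ hA =>
    obtain ⟨j, rfl⟩ := hA
    simp [hdual, ite_smul]
  | zero => simp
  | add A B _ _ hA hB => simp only [add_mul, map_add, add_smul, Finset.sum_add_distrib, hA, hB,
      smul_add]
  | smul r A _ hA =>
    simp only [smul_mul_assoc, map_smul, smul_assoc, ← Finset.smul_sum, hA, smul_comm r c]

theorem sum_trace_mul_mul_trace_mul (hspan : Submodule.span R (Set.range W) = ⊤)
    (hdual : ∀ i j, trace R M (W i * W' j) = if i = j then c else 0) (A B : Module.End R M) :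
    ∑ i, trace R M (A * W' i) * trace R M (W i * B) = c * trace R M (A * B) := by
  simpa only [Finset.sum_mul, smul_mul_assoc, map_sum, map_smul, smul_eq_mul] using
    congrArg (fun X ↦ trace R M (X * B)) (sum_trace_mul_smul_eq_smul hspan hdual A)

end TraceForm

theorem IsAddChar.map_zero_eq_one {F : Type} [Field F] {ψ : F → ℂ} (hψ : IsAddChar ψ) :
    ψ 0 = 1 :=
  (mul_eq_left₀ (hψ.2.1 0)).mp (by rw [← hψ.1, add_zero])

theorem IsAddChar.exists_apply_ne_one {F : Type} {W : Type*} [Field F] [AddCommGroup W]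
    [Module F W] {ψ : F → ℂ} (hψ : IsAddChar ψ) {φ : W →ₗ[F] F} (hφ : φ ≠ 0) :
    ∃ w, ψ (φ w) ≠ 1 := by
  obtain ⟨a, ha⟩ := hψ.2.2
  obtain ⟨w, rfl⟩ := LinearMap.surjective hφ a
  exact ⟨w, ha⟩

section HeisenbergRepresentation

open LinearMap (trace)

omit [Fintype k]

variable {ω : V →ₗ[k] V →ₗ[k] k} {ψ : k → ℂ} {ℋ : Type} [AddCommGroup ℋ] [Module ℂ ℋ]
  {π : V × k → (ℋ →ₗ[ℂ] ℋ)}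

namespace IsHeisenbergRep

section Operators

omit [Fintype V]

theorem apply_eq_smul (hπ : IsHeisenbergRep ω ψ π) (v : V) (z : k) :
    π (v, z) = ψ z • π (v, 0) := by
  have hmul := hπ.2.1 (0, z) (v, 0)
  simpa [hMul, hπ.2.2.1, LinearMap.smul_comp] using hmul

theorem mul_eq_smul (hπ : IsHeisenbergRep ω ψ π) (u v : V) :
    π (u, 0) * π (v, 0) = ψ ((2 : k)⁻¹ * ω u v) • π (u + v, 0) := by
  rw [← hπ.apply_eq_smul, Module.End.mul_eq_comp, ← hπ.2.1]
  simp [hMul]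

theorem mul_neg_eq_one (hπ : IsHeisenbergRep ω ψ π) (hω : ω.IsAlt) (hψ : IsAddChar ψ) (v : V) :
    π (v, 0) * π (-v, 0) = 1 := by
  rw [hπ.mul_eq_smul, map_neg, hω.self_eq_zero, neg_zero, mul_zero, hψ.map_zero_eq_one, one_smul,
    add_neg_cancel, hπ.1, Module.End.one_eq_id]

theorem mul_eq_smul_mul_swap (hπ : IsHeisenbergRep ω ψ π) (h2 : (2 : k) ≠ 0) (hω : ω.IsAlt)
    (hψ : IsAddChar ψ) (u v : V) :
    π (u, 0) * π (v, 0) = ψ (ω u v) • (π (v, 0) * π (u, 0)) := by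
  have hphase : (2 : k)⁻¹ * ω u v = ω u v + (2 : k)⁻¹ * ω v u := by
    rw [← hω.neg u v]
    field_simp
    ring
  rw [hπ.mul_eq_smul, hπ.mul_eq_smul, smul_smul, ← hψ.1, ← hphase, add_comm v u]

variable [FiniteDimensional ℂ ℋ]

theorem trace_eq_zero (hπ : IsHeisenbergRep ω ψ π) (h2 : (2 : k) ≠ 0) (hω : ω.IsAlt)
    (hψ : IsAddChar ψ) {v : V} (hv : ω v ≠ 0) : trace ℂ ℋ (π (v, 0)) = 0 := by
  obtain ⟨w, hw⟩ := hψ.exists_apply_ne_one hv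
  exact trace_eq_zero_of_mul_eq_smul_mul (IsUnit.of_mul_eq_one _ (hπ.mul_neg_eq_one hω hψ w)) hw
    (hπ.mul_eq_smul_mul_swap h2 hω hψ v w)

theorem trace_mul_neg (hπ : IsHeisenbergRep ω ψ π) (h2 : (2 : k) ≠ 0) (hω : ω.IsAlt)
    (hnd : ω.SeparatingLeft) (hψ : IsAddChar ψ) (u v : V) :
    trace ℂ ℋ (π (u, 0) * π (-v, 0)) = if u = v then (Module.finrank ℂ ℋ : ℂ) else 0 := by
  split_ifs with huv
  · rw [huv, hπ.mul_neg_eq_one hω hψ, LinearMap.trace_one]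
  · have hne : ω (u + -v) ≠ 0 := fun h ↦
      huv (add_neg_eq_zero.mp (hnd _ fun w ↦ by rw [h, LinearMap.zero_apply]))
    rw [hπ.mul_eq_smul, map_smul, hπ.trace_eq_zero h2 hω hψ hne, smul_zero]

theorem span_range_eq_top [Nontrivial ℋ] (hπ : IsHeisenbergRep ω ψ π) :
    Submodule.span ℂ (Set.range fun v : V ↦ π (v, 0)) = ⊤ := by
  let S : Submonoid (Module.End ℂ ℋ) :=
    { carrier := Set.range π
      one_mem' := ⟨(0, 0), hπ.1⟩
      mul_mem' := by
        rintro _ _ ⟨x, rfl⟩ ⟨y, rfl⟩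
        exact ⟨hMul ω x y, hπ.2.1 x y⟩ }
  have hS : Submodule.span ℂ (Set.range π) = ⊤ :=
    span_submonoid_end_eq_top_of_irreducible S fun W hW ↦
      hπ.2.2.2 W fun x ↦ hW (π x) ⟨x, rfl⟩
  rw [eq_top_iff, ← hS, Submodule.span_le]
  rintro _ ⟨⟨v, z⟩, rfl⟩
  rw [hπ.apply_eq_smul v z]
  exact Submodule.smul_mem _ _ (Submodule.subset_span ⟨v, rfl⟩)

end Operators

theorem sum_trace_mul_trace [FiniteDimensional ℂ ℋ] [Nontrivial ℋ]
    (hπ : IsHeisenbergRep ω ψ π) (h2 : (2 : k) ≠ 0) (hω : ω.IsAlt) (hnd : ω.SeparatingLeft)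
    (hψ : IsAddChar ψ) (A B : Module.End ℂ ℋ) :
    ∑ u : V, trace ℂ ℋ (A * π (-u, 0)) * trace ℂ ℋ (π (u, 0) * B) =
      Module.finrank ℂ ℋ * trace ℂ ℋ (A * B) :=
  sum_trace_mul_mul_trace_mul hπ.span_range_eq_top (hπ.trace_mul_neg h2 hω hnd hψ) A B

end IsHeisenbergRep

/-- The twisted convolution `f₁ ∗ f₂` on `ℂ(V)`, induced by convolution on the Heisenberg group
of functions that transform by `ψ⁻¹` under the center. -/
noncomputable def twistedConv (ω : V →ₗ[k] V →ₗ[k] k) (ψ : k → ℂ) (f₁ f₂ : V → ℂ) (v : V) : ℂ :=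
  ∑ u : V, f₁ u * f₂ (v - u) * ψ ((2 : k)⁻¹ * ω u v)

/-- The Weyl symbol of an operator `A` on `ℋ`: the function `v ↦ (dim ℋ)⁻¹ Tr (A π(v,0)⁻¹)` on `V`,
whose value at `v` is the coefficient of `π (v, 0)` in `A`. -/
noncomputable def weylSymbol (ω : V →ₗ[k] V →ₗ[k] k) (π : V × k → (ℋ →ₗ[ℂ] ℋ))
    (A : ℋ →ₗ[ℂ] ℋ) (v : V) : ℂ :=
  (Module.finrank ℂ ℋ : ℂ)⁻¹ * trace ℂ ℋ (A ∘ₗ π (hInv ω (v, (0 : k))))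

omit [Fintype V] in
theorem weylSymbol_apply (hω : ω.IsAlt) (A : Module.End ℂ ℋ) (v : V) :
    weylSymbol ω π A v = (Module.finrank ℂ ℋ : ℂ)⁻¹ * trace ℂ ℋ (A * π (-v, 0)) := by
  simp only [weylSymbol, hInv, hω.self_eq_zero, mul_zero, neg_zero, add_zero,
    Module.End.mul_eq_comp]

omit [Fintype V] in
theorem weylSymbol_sub_mul (hπ : IsHeisenbergRep ω ψ π) (hω : ω.IsAlt) (B : Module.End ℂ ℋ)
    (u v : V) :
    weylSymbol ω π B (v - u) * ψ ((2 : k)⁻¹ * ω u v) =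
      (Module.finrank ℂ ℋ : ℂ)⁻¹ * trace ℂ ℋ (π (u, 0) * (B * π (-v, 0))) := by
  have hprod : π (-v, 0) * π (u, 0) = ψ ((2 : k)⁻¹ * ω u v) • π (-(v - u), 0) := by
    rw [hπ.mul_eq_smul, map_neg, LinearMap.neg_apply, hω.neg, neg_add_eq_sub, neg_sub]
  rw [weylSymbol_apply hω, LinearMap.trace_mul_comm ℂ (π (u, 0)), mul_assoc B, hprod,
    mul_smul_comm, map_smul, smul_eq_mul]
  ring

theorem weil_kernel_convolution_general (hchar : ringChar k ≠ 2) (hω : ω.IsAlt)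
    (hnd : ω.SeparatingLeft) (hψ : IsAddChar ψ) [FiniteDimensional ℂ ℋ] [Nontrivial ℋ]
    (hπ : IsHeisenbergRep ω ψ π) (A B : Module.End ℂ ℋ) :
    twistedConv ω ψ (weylSymbol ω π A) (weylSymbol ω π B) = weylSymbol ω π (A * B) := by
  funext v
  have hd : (Module.finrank ℂ ℋ : ℂ) ≠ 0 := Nat.cast_ne_zero.mpr Module.finrank_pos.ne'
  calc twistedConv ω ψ (weylSymbol ω π A) (weylSymbol ω π B) v
      = ∑ u : V, weylSymbol ω π A u * (weylSymbol ω π B (v - u) * ψ ((2 : k)⁻¹ * ω u v)) := by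
        simp only [twistedConv, mul_assoc]
    _ = (Module.finrank ℂ ℋ : ℂ)⁻¹ * (Module.finrank ℂ ℋ : ℂ)⁻¹ *
          ∑ u : V, trace ℂ ℋ (A * π (-u, 0)) * trace ℂ ℋ (π (u, 0) * (B * π (-v, 0))) := by
        simp only [weylSymbol_sub_mul hπ hω]
        simp only [weylSymbol_apply hω, Finset.mul_sum, mul_mul_mul_comm]
    _ = (Module.finrank ℂ ℋ : ℂ)⁻¹ * trace ℂ ℋ (A * B * π (-v, 0)) := by
        rw [hπ.sum_trace_mul_trace (Ring.two_ne_zero hchar) hω hnd hψ, mul_assoc,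
          inv_mul_cancel_left₀ hd, mul_assoc]
    _ = weylSymbol ω π (A * B) v := (weylSymbol_apply hω _ v).symm

end HeisenbergRepresentation

/-- the kernel of the Weil representation satisfies the convolution property
`K(g₁,·) ∗ K(g₂,·) = K(g₁g₂,·)` for the twisted convolution on `ℂ(V)`. -/
theorem weil_kernel_convolution
    (ω : V →ₗ[k] V →ₗ[k] k) (n : ℕ)
    (hchar : ringChar k ≠ 2)
    (hdim : Module.finrank k V = 2 * n)
    (halt : ∀ v : V, ω v v = 0)
    (hnd : ∀ v : V, (∀ u : V, ω v u = 0) → v = 0)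
    (ψ : k → ℂ) (hψ : IsAddChar ψ)
    (ℋ : Type) [AddCommGroup ℋ] [Module ℂ ℋ] [FiniteDimensional ℂ ℋ] [Nontrivial ℋ]
    (π : V × k → (ℋ →ₗ[ℂ] ℋ)) (hπ : IsHeisenbergRep ω ψ π)
    (ρ : ↥(Sp ω) →* (ℋ ≃ₗ[ℂ] ℋ))
    (hρ : ∀ (g : Sp ω) (v : V) (z : k) (x : ℋ),
      ρ g (π (v, z) ((ρ g)⁻¹ x)) = π ((g : V ≃ₗ[k] V) v, z) x)
    (K : ↥(Sp ω) → V → ℂ)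
    (hK : ∀ (g : Sp ω) (v : V),
      K g v = (Module.finrank ℂ ℋ : ℂ)⁻¹ *
        LinearMap.trace ℂ ℋ ((ρ g).toLinearMap ∘ₗ π (hInv ω (v, (0 : k))))) :
    ∀ (g₁ g₂ : Sp ω) (v : V),
      ∑ u : V, K g₁ u * K g₂ (v - u) * ψ ((2 : k)⁻¹ * ω u v) = K (g₁ * g₂) v := by
  obtain rfl : K = fun g ↦ weylSymbol ω π (ρ g).toLinearMap := funext₂ hK
  intro g₁ g₂ v
  simpa only [twistedConv, map_mul, LinearEquiv.coe_toLinearMap_mul] using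
    congrFun (weil_kernel_convolution_general hchar halt hnd hψ hπ (ρ g₁) (ρ g₂)) v
end
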